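/- Let 0 ≤ j ≤ k be non-negative integers and let A and B be τ-structures. The Duplicator has a winning strategy for the (j,k)-pebble-relation game on A and B if and only if the Duplicator has a supercomplete winning strategy for the (j,k)-pebble-relation game on A and B. -/

import Mathlib

/-- A relational structure over vocabulary `σ` with arities `ar`. -/
structure Struct (σ : Type) (ar : σ → ℕ) where
  carrier : Type
  rel : ∀ s : σ, Set (Fin (ar s) → carrier)

namespace Struct

variable {σ : Type} {ar : σ → ℕ}

/-- `h` is a homomorphism from `A` to `B`. -/
def IsHom (A B : Struct σ ar) (h : A.carrier → B.carrier) : Prop :=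
  ∀ s (t : Fin (ar s) → A.carrier), t ∈ A.rel s → (fun i => h (t i)) ∈ B.rel s

/-- `A` homomorphically maps to `B`. -/
def HomTo (A B : Struct σ ar) : Prop := ∃ h, IsHom A B h

/-- `f : I → B` is a homomorphism from the induced substructure `A|I` to `B`. -/
def IsPHom (A B : Struct σ ar) (I : Set A.carrier) (f : ↥I → B.carrier) : Prop :=
  ∀ s (t : Fin (ar s) → A.carrier) (ht : ∀ i, t i ∈ I),
    t ∈ A.rel s → (fun i => f ⟨t i, ht i⟩) ∈ B.rel s

/-- `S_1,…,S_n` is a path-decomposition of `A`. -/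
def IsPathDecomp (A : Struct σ ar) {n : ℕ} (S : Fin n → Set A.carrier) : Prop :=
  (∀ s (t : Fin (ar s) → A.carrier), t ∈ A.rel s → ∃ i, ∀ m, t m ∈ S i) ∧
  (∀ a : A.carrier, ∀ i l p : Fin n, i ≤ l → l ≤ p → a ∈ S i → a ∈ S p → a ∈ S l)

/-- The path-decomposition `S` has width at most `(j,k)`. -/
def DecompWidthLE {A : Struct σ ar} {n : ℕ} (S : Fin n → Set A.carrier)
    (j k : ℕ) : Prop :=
  (∀ i, (S i).Finite ∧ (S i).ncard ≤ k) ∧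
  (∀ i : Fin n, ∀ h : (i : ℕ) + 1 < n, (S i ∩ S ⟨(i : ℕ) + 1, h⟩).ncard ≤ j)

/-- `A` has pathwidth at most `(j,k)`. -/
def PathwidthLE (A : Struct σ ar) (j k : ℕ) : Prop :=
  ∃ (n : ℕ) (S : Fin n → Set A.carrier), IsPathDecomp A S ∧ DecompWidthLE S j k

end Struct

/-- Restriction of a function with domain `I` to a subdomain `I'`. -/
def resFun {α β : Type} {I I' : Set α} (h : I' ⊆ I) (f : ↥I → β) : ↥I' → β :=
  fun x => f ⟨x.1, h x.2⟩

/-- Restriction of a relation (set of functions) with domain `I` to `I'`. -/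
def resRel {α β : Type} {I I' : Set α} (h : I' ⊆ I) (T : Set (↥I → β)) :
    Set (↥I' → β) :=
  resFun h '' T

/-- `H` is a winning strategy for the Duplicator in the `(j,k)`-pebble-relation
game on `A` and `B`.  `H I` is the set of relations in `H` having domain `I`. -/
def IsWinning {σ : Type} {ar : σ → ℕ} (A B : Struct σ ar) (j k : ℕ)
    (H : ∀ I : Set A.carrier, Set (Set (↥I → B.carrier))) : Prop :=
  (∃ I, ∃ T, T ∈ H I) ∧
  (∀ I, ∀ T ∈ H I, I.Finite ∧ I.ncard ≤ k) ∧
  (∀ I, ∀ T ∈ H I, T.Nonempty ∧ ∀ f ∈ T, Struct.IsPHom A B I f) ∧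
  (∀ I, ∀ T ∈ H I, ∀ I' : Set A.carrier, ∀ h : I' ⊆ I, resRel h T ∈ H I') ∧
  (∀ I, ∀ T ∈ H I, I.ncard ≤ j → ∀ I' : Set A.carrier, ∀ h : I ⊆ I',
    I'.Finite → I'.ncard ≤ k → ∃ T' ∈ H I', resRel h T' ⊆ T)

/-- The Duplicator has a winning strategy for the `(j,k)`-pebble-relation game. -/
def HasWinStrategy {σ : Type} {ar : σ → ℕ} (A B : Struct σ ar) (j k : ℕ) : Prop :=
  ∃ H, IsWinning A B j k H

/-- The relation with domain `I''` obtained by extending functions of `T`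
(domain `I' ⊆ I`) to partial homomorphisms on `I` and projecting onto `I''`. -/
def extProj {σ : Type} {ar : σ → ℕ} (A B : Struct σ ar)
    {I I' I'' : Set A.carrier} (h1 : I' ⊆ I) (h2 : I'' ⊆ I)
    (T : Set (↥I' → B.carrier)) : Set (↥I'' → B.carrier) :=
  {g | ∃ f : ↥I → B.carrier, Struct.IsPHom A B I f ∧ resFun h1 f ∈ T ∧
        g = resFun h2 f}

/-- `H` is a complete winning strategy for the `(j,k)`-pebble-relation game on
`A` and `B`.  (`Set.univ` over `↥(∅ : Set A.carrier) → B.carrier` is exactly the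
relation `{λ}` containing only the empty function.) -/
def IsCompleteWinning {σ : Type} {ar : σ → ℕ} (A B : Struct σ ar) (j k : ℕ)
    (H : ∀ I : Set A.carrier, Set (Set (↥I → B.carrier))) : Prop :=
  (∀ I, ∀ T ∈ H I, I.Finite ∧ I.ncard ≤ j) ∧
  ((Set.univ : Set (↥(∅ : Set A.carrier) → B.carrier)) ∈ H ∅) ∧
  (∀ I : Set A.carrier, (∅ : Set (↥I → B.carrier)) ∉ H I) ∧
  (∀ I : Set A.carrier, I.Finite → I.ncard ≤ k →
    ∀ I' : Set A.carrier, ∀ h1 : I' ⊆ I, ∀ T ∈ H I',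
      ∀ I'' : Set A.carrier, ∀ h2 : I'' ⊆ I, I''.ncard ≤ j →
        extProj A B h1 h2 T ∈ H I'')
/-- `H` is a supercomplete winning strategy: a complete winning strategy closed
upwards under inclusion of relations with the same domain. -/
def IsSupercompleteWinning {σ : Type} {ar : σ → ℕ} (A B : Struct σ ar) (j k : ℕ)
    (H : ∀ I : Set A.carrier, Set (Set (↥I → B.carrier))) : Prop :=
  IsCompleteWinning A B j k H ∧
  (∀ I : Set A.carrier, ∀ T ∈ H I, ∀ T' : Set (↥I → B.carrier), T ⊆ T' → T' ∈ H I)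

/-!
A winning strategy becomes supercomplete by discarding the relations on more than `j` points and
closing upwards. If `T` contains a relation `T₁` of the original strategy and Duplicator extends
`T₁` to `T'`, then every function in `T'` is one of the homomorphisms from which the complete
strategy computes its answer to `T`; hence that answer contains a restriction of `T'`.

Conversely, from a complete strategy take all relations on at most `k` points that consist of
partial homomorphisms and whose restrictions to at most `j` points belong to the strategy. To
extend `T`, Duplicator answers with *all* the homomorphisms that extend functions of `T`, since
the restrictions of this relation are exactly those that completeness puts into the strategy.
-/

section Restriction

variable {α β : Type} {I I' I'' : Set α}

theorem resRel_rfl (T : Set (↥I → β)) : resRel subset_rfl T = T :=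
  Set.image_id T

theorem resRel_resRel (h : I' ⊆ I) (h' : I'' ⊆ I') (T : Set (↥I → β)) :
    resRel h' (resRel h T) = resRel (h'.trans h) T :=
  Set.image_image _ _ T

theorem resRel_mono (h : I' ⊆ I) {T T' : Set (↥I → β)} (hT : T ⊆ T') :
    resRel h T ⊆ resRel h T' :=
  Set.image_mono hT

theorem resRel_nonempty_iff (h : I' ⊆ I) {T : Set (↥I → β)} :
    (resRel h T).Nonempty ↔ T.Nonempty :=
  Set.image_nonempty

end Restriction

section PebbleRelationGame

variable {σ : Type} {ar : σ → ℕ} {A B : Struct σ ar} {j k : ℕ} {I I' I'' : Set A.carrier}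
  {H : ∀ I : Set A.carrier, Set (Set (↥I → B.carrier))}

theorem Struct.IsPHom.restrict (h : I' ⊆ I) {f : ↥I → B.carrier} (hf : IsPHom A B I f) :
    IsPHom A B I' (resFun h f) :=
  fun s t ht hts => hf s t (fun i => h (ht i)) hts

/-- The homomorphisms from `A|I` to `B` that extend a function in the relation `T` with domain
`I' ⊆ I`: the largest relation with which Duplicator can answer `T` on `I`. -/
def homExt (A B : Struct σ ar) {I I' : Set A.carrier} (h : I' ⊆ I) (T : Set (↥I' → B.carrier)) :
    Set (↥I → B.carrier) :=
  {f | Struct.IsPHom A B I f ∧ resFun h f ∈ T}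

theorem subset_homExt_iff (h : I' ⊆ I) {S : Set (↥I → B.carrier)} {T : Set (↥I' → B.carrier)} :
    S ⊆ homExt A B h T ↔ (∀ f ∈ S, Struct.IsPHom A B I f) ∧ resRel h S ⊆ T := by
  rw [resRel, Set.image_subset_iff]
  exact Set.subset_inter_iff

theorem resRel_homExt_subset (h : I' ⊆ I) (T : Set (↥I' → B.carrier)) :
    resRel h (homExt A B h T) ⊆ T :=
  ((subset_homExt_iff h).1 subset_rfl).2

theorem resRel_homExt (h₁ : I' ⊆ I) (h₂ : I'' ⊆ I) (T : Set (↥I' → B.carrier)) :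
    resRel h₂ (homExt A B h₁ T) = extProj A B h₁ h₂ T := by
  ext g
  simp only [resRel, homExt, extProj, Set.mem_image, Set.mem_ofPred_eq, and_assoc, eq_comm]

/-- The supercomplete strategy induced by a winning strategy `H`: the relations on at most `j`
points that contain a relation of `H` with the same domain. -/
def smallUpperClosure (j : ℕ) (H : ∀ I : Set A.carrier, Set (Set (↥I → B.carrier)))
    (I : Set A.carrier) : Set (Set (↥I → B.carrier)) :=
  {T | I.Finite ∧ I.ncard ≤ j ∧ T ∈ upperClosure (H I)}

/-- The winning strategy induced by a complete strategy `H`: the relations on at most `k` points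
that consist of partial homomorphisms and whose restrictions to at most `j` points belong to
`H`. -/
def locallyInStrategy (j k : ℕ) (H : ∀ I : Set A.carrier, Set (Set (↥I → B.carrier)))
    (I : Set A.carrier) : Set (Set (↥I → B.carrier)) :=
  {T | I.Finite ∧ I.ncard ≤ k ∧ (∀ f ∈ T, Struct.IsPHom A B I f) ∧
    ∀ I' : Set A.carrier, ∀ h : I' ⊆ I, I'.ncard ≤ j → resRel h T ∈ H I'}

namespace IsWinning

theorem extProj_mem_smallUpperClosure (hH : IsWinning A B j k H) (hI : I.Finite)
    (hIk : I.ncard ≤ k) (h₁ : I' ⊆ I) {T : Set (↥I' → B.carrier)}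
    (hT : T ∈ smallUpperClosure j H I') (h₂ : I'' ⊆ I) (hI'' : I''.ncard ≤ j) :
    extProj A B h₁ h₂ T ∈ smallUpperClosure j H I'' := by
  obtain ⟨-, -, hhom, hres, hext⟩ := hH
  obtain ⟨-, hI', T₁, hT₁, hT₁T⟩ := hT
  obtain ⟨T', hT', hT'T₁⟩ := hext I' T₁ hT₁ hI' I h₁ hI hIk
  have hT'ext : T' ⊆ homExt A B h₁ T :=
    (subset_homExt_iff h₁).2 ⟨(hhom I T' hT').2, hT'T₁.trans hT₁T⟩
  refine ⟨hI.subset h₂, hI'', resRel h₂ T', hres I T' hT' I'' h₂, ?_⟩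
  rw [← resRel_homExt]
  exact resRel_mono h₂ hT'ext

theorem isSupercompleteWinning_smallUpperClosure (hH : IsWinning A B j k H) :
    IsSupercompleteWinning A B j k (smallUpperClosure j H) := by
  have ⟨⟨I₀, T₀, hT₀⟩, _, hhom, hres, _⟩ := hH
  refine ⟨⟨fun I T hT => ⟨hT.1, hT.2.1⟩, ?univ_mem, ?empty_notMem, ?extProj_mem⟩, ?upward_closed⟩
  case univ_mem =>
    exact ⟨Set.finite_empty, by simp, _, hres I₀ T₀ hT₀ ∅ (Set.empty_subset I₀), Set.subset_univ _⟩
  case empty_notMem =>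
    rintro I ⟨-, -, T, hT, hTempty⟩
    exact (hhom I T hT).1.ne_empty (Set.subset_empty_iff.1 hTempty)
  case extProj_mem =>
    exact fun I hI hIk I' h₁ T hT I'' h₂ hI'' =>
      hH.extProj_mem_smallUpperClosure hI hIk h₁ hT h₂ hI''
  case upward_closed =>
    exact fun I T ⟨hI, hIj, hT⟩ T' hTT' => ⟨hI, hIj, (upperClosure (H I)).upper hTT' hT⟩

end IsWinning

theorem resRel_mem_locallyInStrategy (h : I' ⊆ I) {T : Set (↥I → B.carrier)}
    (hT : T ∈ locallyInStrategy j k H I) : resRel h T ∈ locallyInStrategy j k H I' := by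
  obtain ⟨hI, hIk, hhom, hmem⟩ := hT
  refine ⟨hI.subset h, (Set.ncard_le_ncard h hI).trans hIk, ?_, fun I'' h' hI'' => ?_⟩
  · rintro _ ⟨f, hf, rfl⟩
    exact (hhom f hf).restrict h
  · rw [resRel_resRel]
    exact hmem I'' (h'.trans h) hI''

theorem mem_of_mem_locallyInStrategy {T : Set (↥I → B.carrier)}
    (hT : T ∈ locallyInStrategy j k H I) (hI : I.ncard ≤ j) : T ∈ H I :=
  resRel_rfl T ▸ hT.2.2.2 I subset_rfl hI

namespace IsCompleteWinning

theorem nonempty_of_mem_locallyInStrategy (hH : IsCompleteWinning A B j k H)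
    {T : Set (↥I → B.carrier)} (hT : T ∈ locallyInStrategy j k H I) : T.Nonempty := by
  have hmem : resRel (Set.empty_subset I) T ∈ H ∅ := hT.2.2.2 ∅ (Set.empty_subset I) (by simp)
  rw [← resRel_nonempty_iff (Set.empty_subset I), Set.nonempty_iff_ne_empty]
  exact ne_of_mem_of_not_mem hmem (hH.2.2.1 ∅)

theorem homExt_mem_locallyInStrategy (hH : IsCompleteWinning A B j k H) (hI : I.Finite)
    (hIk : I.ncard ≤ k) (h : I' ⊆ I) {T : Set (↥I' → B.carrier)} (hT : T ∈ H I') :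
    homExt A B h T ∈ locallyInStrategy j k H I := by
  refine ⟨hI, hIk, fun f hf => hf.1, fun I'' h' hI'' => ?_⟩
  rw [resRel_homExt]
  exact hH.2.2.2 I hI hIk I' h T hT I'' h' hI''

theorem isWinning_locallyInStrategy (hH : IsCompleteWinning A B j k H) :
    IsWinning A B j k (locallyInStrategy j k H) := by
  refine ⟨?exists_mem, fun I T hT => ⟨hT.1, hT.2.1⟩,
    fun I T hT => ⟨hH.nonempty_of_mem_locallyInStrategy hT, hT.2.2.1⟩,
    fun I T hT I' h => resRel_mem_locallyInStrategy h hT, ?exists_extension⟩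
  case exists_mem =>
    exact ⟨∅, _, hH.homExt_mem_locallyInStrategy Set.finite_empty (by simp) subset_rfl hH.2.1⟩
  case exists_extension =>
    intro I T hT hIj I' h hI' hI'k
    have hTH : T ∈ H I := mem_of_mem_locallyInStrategy hT hIj
    exact ⟨homExt A B h T, hH.homExt_mem_locallyInStrategy hI' hI'k h hTH,
      resRel_homExt_subset h T⟩

end IsCompleteWinning

end PebbleRelationGame

theorem stmt6_general {σ : Type} {ar : σ → ℕ} (j k : ℕ) (A B : Struct σ ar) :
    (∃ H, IsWinning A B j k H) ↔ (∃ H, IsSupercompleteWinning A B j k H) :=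
  ⟨fun ⟨_, hH⟩ => ⟨_, hH.isSupercompleteWinning_smallUpperClosure⟩,
    fun ⟨_, hH⟩ => ⟨_, hH.1.isWinning_locallyInStrategy⟩⟩

/-- the Duplicator has a winning strategy for the
`(j,k)`-pebble-relation game on `A` and `B` iff it has a supercomplete one. -/
theorem stmt6 {σ : Type} {ar : σ → ℕ} [Finite σ] (j k : ℕ) (hjk : j ≤ k)
    (A B : Struct σ ar) :
    (∃ H, IsWinning A B j k H) ↔ (∃ H, IsSupercompleteWinning A B j k H) :=
  stmt6_general j k A B
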